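/- For every finite sequence A of real numbers and every real number x, f(A ++ [x]) = max{ f(A), max{0, Suf(A) + x} }. (This is the correctness of the global-maximum update μ*_{i+1} = max{μ*_i, μ_{i+1}} in Kadane's algorithm.) -/

import Mathlib

/-!
An infix of `A ++ [x]` is either an infix of `A` or a suffix of `A ++ [x]`, and the nonempty
suffixes of `A ++ [x]` are the lists `t ++ [x]` for `t` a suffix of `A`. A maximum is determined by
its upper bounds, so both facts turn into identities between the corresponding maxima.
-/

/-- Maximum subarray sum of a finite sequence: the maximum of 0 and all sums of
contiguous subsequences (the empty infix, of sum 0, is among the infixes). -/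
noncomputable def msum (W : List ℝ) : ℝ :=
  ((W.inits.flatMap List.tails).map List.sum).foldr max 0

/-- Maximum prefix sum: the maximum of 0 and all prefix sums. -/
noncomputable def presum (W : List ℝ) : ℝ :=
  (W.inits.map List.sum).foldr max 0

/-- Maximum suffix sum: the maximum of 0 and all suffix sums. -/
noncomputable def sufsum (W : List ℝ) : ℝ :=
  (W.tails.map List.sum).foldr max 0

theorem foldr_sup_le_iff {α : Type*} [SemilatticeSup α] {l : List α} {a c : α} :
    l.foldr (· ⊔ ·) a ≤ c ↔ a ≤ c ∧ ∀ y ∈ l, y ≤ c := by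
  induction l with
  | nil => simp
  | cons b l ih =>
    rw [List.foldr_cons, sup_le_iff, ih, List.forall_mem_cons, and_left_comm]

theorem mem_flatMap_inits_tails {α : Type*} {s l : List α} :
    s ∈ l.inits.flatMap List.tails ↔ s <:+: l := by
  simp only [List.mem_flatMap, List.mem_inits, List.mem_tails, List.infix_iff_suffix_prefix,
    and_comm]

theorem forall_suffix_concat_iff {α : Type*} {P : List α → Prop} {l : List α} {a : α} :
    (∀ s, s <:+ l ++ [a] → P s) ↔ P [] ∧ ∀ t, t <:+ l → P (t ++ [a]) := by
  simp only [List.suffix_concat_iff, or_imp, forall_and, forall_eq, forall_exists_index, and_imp]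
  rw [forall_comm]
  simp only [forall_eq]

theorem msum_le_iff {W : List ℝ} {c : ℝ} : msum W ≤ c ↔ ∀ s, s <:+: W → s.sum ≤ c := by
  rw [msum, foldr_sup_le_iff, List.forall_mem_map]
  simp only [mem_flatMap_inits_tails]
  exact and_iff_right_of_imp fun h => h [] List.nil_infix

theorem sufsum_le_iff {W : List ℝ} {c : ℝ} : sufsum W ≤ c ↔ ∀ s, s <:+ W → s.sum ≤ c := by
  rw [sufsum, foldr_sup_le_iff, List.forall_mem_map]
  simp only [List.mem_tails]
  exact and_iff_right_of_imp fun h => h [] List.nil_suffix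

theorem sufsum_concat (A : List ℝ) (x : ℝ) : sufsum (A ++ [x]) = max 0 (sufsum A + x) := by
  refine eq_of_forall_ge_iff fun c => ?_
  calc sufsum (A ++ [x]) ≤ c
      ↔ 0 ≤ c ∧ ∀ t, t <:+ A → t.sum + x ≤ c := by
        simp only [sufsum_le_iff, forall_suffix_concat_iff, List.sum_nil, List.sum_append,
          List.sum_singleton]
    _ ↔ 0 ≤ c ∧ sufsum A + x ≤ c := by
        simp only [← le_sub_iff_add_le, sufsum_le_iff]
    _ ↔ max 0 (sufsum A + x) ≤ c := max_le_iff.symm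

theorem msum_concat_eq_max_sufsum (A : List ℝ) (x : ℝ) :
    msum (A ++ [x]) = max (msum A) (sufsum (A ++ [x])) := by
  refine eq_of_forall_ge_iff fun c => ?_
  rw [max_le_iff, msum_le_iff, msum_le_iff, sufsum_le_iff, and_comm]
  simp only [List.infix_concat_iff, or_imp, forall_and]

/-- Correctness of the global-maximum update in Kadane's algorithm. -/
theorem msum_concat (A : List ℝ) (x : ℝ) :
    msum (A ++ [x]) = max (msum A) (max 0 (sufsum A + x)) := by
  rw [msum_concat_eq_max_sufsum, sufsum_concat]
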